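/- arXiv:1511.02163 — 8 statements merged into one kernel-verified Lean document; each statement's English description precedes it below -/
import Mathlib

section
/- Let V be a finite set and let f : 2^V → ℝ be a positive polymatroid function. Then d_f(A, B) := f(A △ B) is a metric on the subsets of V: for all A, B, C ⊆ V, (i) d_f(A, B) ≥ 0; (ii) d_f(A, B) = 0 if and only if A = B; (iii) d_f(A, B) = d_f(B, A); and (iv) d_f(A, B) ≤ d_f(A, C) + d_f(C, B). -/
open scoped symmDiff

section SetFunction

variable {α R : Type*} {f : α → R}

theorem map_sup_le_add_of_submodular [Lattice α] [AddZeroClass R] [Preorder R] [AddLeftMono R]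
    (hnonneg : ∀ a, 0 ≤ f a) (hsubmod : ∀ a b, f (a ⊔ b) + f (a ⊓ b) ≤ f a + f b) (a b : α) :
    f (a ⊔ b) ≤ f a + f b :=
  calc
    f (a ⊔ b) ≤ f (a ⊔ b) + f (a ⊓ b) := le_add_of_nonneg_right (hnonneg (a ⊓ b))
    _ ≤ f a + f b := hsubmod a b

theorem nonneg_of_monotone_of_map_bot [Preorder α] [OrderBot α] [Preorder R] [Zero R]
    (hmono : Monotone f) (hbot : f ⊥ = 0) (a : α) : 0 ≤ f a :=
  hbot.ge.trans (hmono bot_le)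

theorem map_eq_zero_iff_eq_bot [LE α] [OrderBot α] [Preorder R] [Zero R]
    (hpos : ∀ a, a ≠ ⊥ → 0 < f a) (hbot : f ⊥ = 0) (a : α) : f a = 0 ↔ a = ⊥ :=
  ⟨fun hzero => by_contra fun hne => (hpos a hne).ne' hzero, fun h => h ▸ hbot⟩

variable [GeneralizedCoheytingAlgebra α] [Preorder R]

theorem map_symmDiff_le_add [Add R] (hmono : Monotone f)
    (hsubadd : ∀ a b, f (a ⊔ b) ≤ f a + f b) (a b c : α) :
    f (a ∆ b) ≤ f (a ∆ c) + f (c ∆ b) :=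
  calc
    f (a ∆ b) ≤ f (a ∆ c ⊔ c ∆ b) := hmono (symmDiff_triangle a c b)
    _ ≤ f (a ∆ c) + f (c ∆ b) := hsubadd (a ∆ c) (c ∆ b)

theorem submodular_hamming_metric_polymatroid_general [AddZeroClass R]
    (hpos : ∀ a, a ≠ ⊥ → 0 < f a) (hbot : f ⊥ = 0) (hmono : Monotone f)
    (hsubadd : ∀ a b, f (a ⊔ b) ≤ f a + f b) :
    (∀ a b, 0 ≤ f (a ∆ b)) ∧
    (∀ a b, f (a ∆ b) = 0 ↔ a = b) ∧
    (∀ a b, f (a ∆ b) = f (b ∆ a)) ∧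
    (∀ a b c, f (a ∆ b) ≤ f (a ∆ c) + f (c ∆ b)) :=
  ⟨fun a b => nonneg_of_monotone_of_map_bot hmono hbot (a ∆ b),
    fun a b => (map_eq_zero_iff_eq_bot hpos hbot (a ∆ b)).trans symmDiff_eq_bot,
    fun a b => congrArg f (symmDiff_comm a b),
    map_symmDiff_le_add hmono hsubadd⟩

end SetFunction

/-- If `f` is a positive polymatroid function (positive, normalized, monotone,
submodular) on a finite ground set `V`, then `d_f(A, B) = f(A △ B)` is a metric
on the subsets of `V`. -/
theorem submodular_hamming_metric_polymatroid
    {V : Type*} [Fintype V] [DecidableEq V] (f : Finset V → ℝ)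
    (hpos : ∀ A : Finset V, A ≠ ∅ → 0 < f A)
    (hnorm : f ∅ = 0)
    (hmono : ∀ A B : Finset V, A ⊆ B → f A ≤ f B)
    (hsubmod : ∀ A B : Finset V, f (A ∪ B) + f (A ∩ B) ≤ f A + f B) :
    (∀ A B : Finset V, 0 ≤ f ((A \ B) ∪ (B \ A))) ∧
    (∀ A B : Finset V, f ((A \ B) ∪ (B \ A)) = 0 ↔ A = B) ∧
    (∀ A B : Finset V, f ((A \ B) ∪ (B \ A)) = f ((B \ A) ∪ (A \ B))) ∧
    (∀ A B C : Finset V,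
      f ((A \ B) ∪ (B \ A)) ≤ f ((A \ C) ∪ (C \ A)) + f ((C \ B) ∪ (B \ C))) :=
  submodular_hamming_metric_polymatroid_general hpos hnorm hmono
    (map_sup_le_add_of_submodular (nonneg_of_monotone_of_map_bot hmono hnorm) hsubmod)
end

section
/- Let V be a finite set, let f₁, …, f_m be positive polymatroid functions on 2^V, and let B₁, …, B_m ⊆ V. Define F(A) = Σ_{i=1}^m f_i(A △ B_i) and F̄(A) = Σ_{i=1}^m [ f_i(A \ B_i) + f_i(B_i \ A) ]. If Â ⊆ V minimizes F̄ over all subsets of V, then F(Â) ≤ 2 · min_{A ⊆ V} F(A); that is, exactly minimizing the split objective F̄ yields a 2-approximation for unconstrained minimization of F. -/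
/-!
For a monotone subadditive `g`, splitting `x ∆ y` into its two halves loses at most a factor of two:
`g (x ∆ y) ≤ g (x \ y) + g (y \ x) ≤ 2 • g (x ∆ y)`. Summing, `F ≤ F̄ ≤ 2 • F`, and a minimizer of
a function sandwiched in this way is a 2-approximate minimizer of `F`.
-/

open scoped symmDiff

section Submodular

variable {α M : Type*} [Lattice α] [OrderBot α] [AddCommMonoid M] [PartialOrder M]
  [IsOrderedAddMonoid M]

theorem map_sup_le_add_of_submodular_s5 {g : α → M} (hmono : Monotone g) (hbot : 0 ≤ g ⊥)
    (hsubmod : ∀ x y, g (x ⊔ y) + g (x ⊓ y) ≤ g x + g y) (x y : α) :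
    g (x ⊔ y) ≤ g x + g y :=
  calc
    g (x ⊔ y) ≤ g (x ⊔ y) + g (x ⊓ y) := le_add_of_nonneg_right (hbot.trans (hmono bot_le))
    _ ≤ g x + g y := hsubmod x y

end Submodular

section Costs

variable {ι α M : Type*} [Fintype ι] [GeneralizedCoheytingAlgebra α] [AddCommMonoid M]

/-- The objective `F` of the paper: the total cost of the symmetric differences of `x` with the
targets `b i`, the `i`-th one measured by `f i`. Sets are replaced by elements of a generalized
co-Heyting algebra. -/
def symmDiffCost (f : ι → α → M) (b : ι → α) (x : α) : M :=
  ∑ i, f i (x ∆ b i)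

/-- The split objective `F̄` of the paper, in which the two halves `x \ b i` and `b i \ x` of each
symmetric difference are charged separately. -/
def splitCost (f : ι → α → M) (b : ι → α) (x : α) : M :=
  ∑ i, (f i (x \ b i) + f i (b i \ x))

variable [PartialOrder M] [IsOrderedAddMonoid M] {f : ι → α → M}

theorem symmDiffCost_le_splitCost (hsub : ∀ i x y, f i (x ⊔ y) ≤ f i x + f i y) (b : ι → α)
    (x : α) : symmDiffCost f b x ≤ splitCost f b x :=
  Finset.sum_le_sum fun i _ => hsub i (x \ b i) (b i \ x)

theorem splitCost_le_two_nsmul_symmDiffCost (hmono : ∀ i, Monotone (f i)) (b : ι → α) (x : α) :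
    splitCost f b x ≤ 2 • symmDiffCost f b x := by
  rw [splitCost, symmDiffCost, Finset.smul_sum]
  gcongr with i
  rw [two_nsmul]
  exact add_le_add (hmono i le_sup_left) (hmono i le_sup_right)

theorem union_split_two_approx_min_general (hmono : ∀ i, Monotone (f i))
    (hsub : ∀ i x y, f i (x ⊔ y) ≤ f i x + f i y) {b : ι → α} {C : Set α} {a : α}
    (ha : IsMinOn (splitCost f b) C a) {x : α} (hx : x ∈ C) :
    symmDiffCost f b a ≤ 2 • symmDiffCost f b x :=
  calc
    symmDiffCost f b a ≤ splitCost f b a := symmDiffCost_le_splitCost hsub b a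
    _ ≤ splitCost f b x := isMinOn_iff.1 ha x hx
    _ ≤ 2 • symmDiffCost f b x := splitCost_le_two_nsmul_symmDiffCost hmono b x

end Costs

/-- Exactly minimizing the split objective `F̄(A) = Σᵢ [fᵢ(A \ Bᵢ) + fᵢ(Bᵢ \ A)]`
yields a 2-approximation for unconstrained minimization of
`F(A) = Σᵢ fᵢ(A △ Bᵢ)`, when each `fᵢ` is a positive polymatroid. -/
theorem union_split_two_approx_min
    {V : Type*} [Fintype V] [DecidableEq V]
    (m : ℕ) (f : Fin m → Finset V → ℝ) (B : Fin m → Finset V)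
    (hpos : ∀ i, ∀ A : Finset V, A ≠ ∅ → 0 < f i A)
    (hnorm : ∀ i, f i ∅ = 0)
    (hmono : ∀ i, ∀ X Y : Finset V, X ⊆ Y → f i X ≤ f i Y)
    (hsubmod : ∀ i, ∀ X Y : Finset V, f i (X ∪ Y) + f i (X ∩ Y) ≤ f i X + f i Y)
    (Ahat : Finset V)
    (hAhat : ∀ A : Finset V,
      (∑ i, (f i (Ahat \ B i) + f i (B i \ Ahat))) ≤
      (∑ i, (f i (A \ B i) + f i (B i \ A)))) :
    ∀ A : Finset V,
      (∑ i, f i ((Ahat \ B i) ∪ (B i \ Ahat))) ≤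
      2 * (∑ i, f i ((A \ B i) ∪ (B i \ A))) := by
  intro A
  have hsub i := map_sup_le_add_of_submodular_s5 (hmono i) (hnorm i).ge (hsubmod i)
  rw [two_mul, ← two_nsmul]
  exact union_split_two_approx_min_general hmono hsub (isMinOn_univ_iff.2 hAhat) (Set.mem_univ A)
end

section
/- The factor-2 guarantee of the split objective is tight in the limit: let V = {1, 2}, let α > 1, let f₁(Y) = f₂(Y) = |Y|^{1/α}, and let B₁ = {1}, B₂ = {2}. Define F(A) = f₁(A △ B₁) + f₂(A △ B₂) and F̄(A) = Σ_{i=1}^{2} [ f_i(A \ B_i) + f_i(B_i \ A) ]. Then F̄(A) = 2 for every A ⊆ V (so every subset, including ∅ and V, minimizes F̄), while min_{A ⊆ V} F(A) = 2^{1/α} (attained at A = {1} and A = {2}) and F(∅) = F(V) = 2. -/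
/-!
When `f i Y = g #Y` and `B i = {i}`, both objectives depend only on `#A`. On a two-element
ground set this leaves `F̄ ≡ 2 (g 0 + g 1)`, whereas `F` is `g 0 + g 2` on singletons and
`2 g 1` on `∅` and `V`. Concavity of `g` on `{0, 1, 2}` makes the former value the smaller one.
-/

open Finset
open scoped symmDiff

section Objectives

variable {ι V M : Type*} [Fintype ι] [DecidableEq V] [AddCommMonoid M]

/-- The objective `F(A) = ∑ i, f i (A ∆ B i)`, which measures how far `A` is from the sets `B i`. -/
def symmDiffObjective (f : ι → Finset V → M) (B : ι → Finset V) (A : Finset V) : M :=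
  ∑ i, f i (A ∆ B i)

/-- The split objective `F̄(A) = ∑ i, (f i (A \ B i) + f i (B i \ A))`, the surrogate for
`symmDiffObjective` that charges the two halves of each symmetric difference separately. -/
def splitObjective (f : ι → Finset V → M) (B : ι → Finset V) (A : Finset V) : M :=
  ∑ i, (f i (A \ B i) + f i (B i \ A))

end Objectives

section SymmDiffSingleton

variable {V : Type*} [DecidableEq V] {A : Finset V} {v : V}

lemma card_symmDiff_singleton_of_mem (hv : v ∈ A) : #(A ∆ {v}) = #A - 1 := by
  rw [symmDiff_of_ge (singleton_subset_iff.2 hv), sdiff_singleton_eq_erase, card_erase_of_mem hv]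

lemma card_symmDiff_singleton_of_notMem (hv : v ∉ A) : #(A ∆ {v}) = #A + 1 := by
  have hdisj : Disjoint A {v} := disjoint_singleton_right.2 hv
  rw [hdisj.symmDiff_eq_sup, sup_eq_union, card_union_of_disjoint hdisj, card_singleton]

end SymmDiffSingleton

section CardinalityCosts

variable {V M : Type*} [Fintype V] [DecidableEq V] [AddCommMonoid M] (g : ℕ → M)

lemma symmDiffObjective_card_singleton (A : Finset V) :
    symmDiffObjective (fun _ Y => g #Y) (fun v => {v}) A =
      #A • g (#A - 1) + #Aᶜ • g (#A + 1) := by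
  have hmem : ∑ v ∈ A, g #(A ∆ {v}) = #A • g (#A - 1) :=
    sum_eq_card_nsmul fun v hv => by rw [card_symmDiff_singleton_of_mem hv]
  have hnotMem : ∑ v ∈ Aᶜ, g #(A ∆ {v}) = #Aᶜ • g (#A + 1) :=
    sum_eq_card_nsmul fun v hv => by
      rw [card_symmDiff_singleton_of_notMem (mem_compl.1 hv)]
  rw [symmDiffObjective, ← sum_add_sum_compl A, hmem, hnotMem]

lemma splitObjective_card_singleton (A : Finset V) :
    splitObjective (fun _ Y => g #Y) (fun v => {v}) A =
      #A • (g (#A - 1) + g 0) + #Aᶜ • (g #A + g 1) := by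
  have hmem : ∑ v ∈ A, (g #(A \ {v}) + g #({v} \ A)) = #A • (g (#A - 1) + g 0) :=
    sum_eq_card_nsmul fun v hv => by
      rw [sdiff_singleton_eq_erase, card_erase_of_mem hv,
        sdiff_eq_empty_iff_subset.2 (singleton_subset_iff.2 hv), card_empty]
  have hnotMem : ∑ v ∈ Aᶜ, (g #(A \ {v}) + g #({v} \ A)) = #Aᶜ • (g #A + g 1) :=
    sum_eq_card_nsmul fun v hv => by
      have hdisj : Disjoint A {v} := disjoint_singleton_right.2 (mem_compl.1 hv)
      rw [sdiff_eq_self_of_disjoint hdisj, sdiff_eq_self_of_disjoint hdisj.symm, card_singleton]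
  rw [splitObjective, ← sum_add_sum_compl A, hmem, hnotMem]

lemma symmDiffObjective_card_singleton_empty :
    symmDiffObjective (fun _ Y => g #Y) (fun v : V => {v}) ∅ = Fintype.card V • g 1 := by
  simp [symmDiffObjective_card_singleton]

lemma symmDiffObjective_card_singleton_univ :
    symmDiffObjective (fun _ Y => g #Y) (fun v : V => {v}) univ =
      Fintype.card V • g (Fintype.card V - 1) := by
  simp [symmDiffObjective_card_singleton]

lemma symmDiffObjective_card_singleton_singleton (v : V) :
    symmDiffObjective (fun _ Y => g #Y) (fun v => {v}) {v} =
      g 0 + (Fintype.card V - 1) • g 2 := by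
  simp [symmDiffObjective_card_singleton, card_compl]

end CardinalityCosts

section TwoElements

variable {V M : Type*} [Fintype V]

lemma eq_empty_or_singleton_or_univ_of_card_eq_two (hV : Fintype.card V = 2) (A : Finset V) :
    A = ∅ ∨ (∃ v, A = {v}) ∨ A = univ := by
  rw [← card_eq_zero, ← card_eq_one, ← card_eq_iff_eq_univ, hV]
  have hle : #A ≤ 2 := hV ▸ card_le_univ A
  omega

variable [DecidableEq V] [AddCommMonoid M]

lemma splitObjective_card_singleton_of_card_eq_two (hV : Fintype.card V = 2) (g : ℕ → M)
    (A : Finset V) :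
    splitObjective (fun _ Y => g #Y) (fun v => {v}) A = 2 • (g 0 + g 1) := by
  rw [splitObjective_card_singleton]
  rcases eq_empty_or_singleton_or_univ_of_card_eq_two hV A with rfl | ⟨v, rfl⟩ | rfl
  · simp [hV]
  · simp [card_compl, hV, two_nsmul]
  · simp [hV, add_comm]

theorem union_split_tightness_general [Preorder M] (hV : Fintype.card V = 2) (g : ℕ → M)
    (hg : g 0 + g 2 ≤ 2 • g 1) :
    let F : Finset V → M := symmDiffObjective (fun _ Y => g #Y) (fun v => {v})
    let Fbar : Finset V → M := splitObjective (fun _ Y => g #Y) (fun v => {v})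
    (∀ A, Fbar A = 2 • (g 0 + g 1)) ∧
    (∀ A, g 0 + g 2 ≤ F A) ∧
    (∀ v, F {v} = g 0 + g 2) ∧
    F ∅ = 2 • g 1 ∧
    F univ = 2 • g 1 := by
  intro F Fbar
  have hsingleton (v : V) : F {v} = g 0 + g 2 := by
    simpa [hV] using symmDiffObjective_card_singleton_singleton g v
  have hempty : F ∅ = 2 • g 1 := by
    simpa only [hV] using symmDiffObjective_card_singleton_empty (V := V) g
  have huniv : F univ = 2 • g 1 := by
    simpa only [hV] using symmDiffObjective_card_singleton_univ (V := V) g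
  refine ⟨splitObjective_card_singleton_of_card_eq_two hV g, fun A => ?_,
    hsingleton, hempty, huniv⟩
  rcases eq_empty_or_singleton_or_univ_of_card_eq_two hV A with rfl | ⟨v, rfl⟩ | rfl
  · exact hg.trans_eq hempty.symm
  · exact (hsingleton v).ge
  · exact hg.trans_eq huniv.symm

end TwoElements

lemma zero_rpow_add_two_rpow_le_two_nsmul_one_rpow {p : ℝ} (hp₀ : 0 < p) (hp₁ : p ≤ 1) :
    (0 : ℝ) ^ p + 2 ^ p ≤ 2 • 1 ^ p := by
  simpa [Real.zero_rpow hp₀.ne'] using Real.rpow_le_self_of_one_le one_le_two hp₁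

/-- Tightness of the factor-2 bound for the split objective: on `V = {1,2}` with
`f₁(Y) = f₂(Y) = |Y|^{1/α}` (`α > 1`), `B₁ = {1}`, `B₂ = {2}`, the split objective
`F̄` is constantly `2`, while `F` has minimum value `2^{1/α}`, attained at `{1}`
and `{2}`, and `F(∅) = F(V) = 2`. -/
theorem union_split_tightness (α : ℝ) (hα : 1 < α) :
    let f : Finset (Fin 2) → ℝ := fun Y => (Y.card : ℝ) ^ (1 / α)
    let B : Fin 2 → Finset (Fin 2) := fun i => {i}
    let F : Finset (Fin 2) → ℝ := fun A => ∑ i, f ((A \ B i) ∪ (B i \ A))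
    let Fbar : Finset (Fin 2) → ℝ := fun A => ∑ i, (f (A \ B i) + f (B i \ A))
    (∀ A : Finset (Fin 2), Fbar A = 2) ∧
    (∀ A : Finset (Fin 2), (2 : ℝ) ^ (1 / α) ≤ F A) ∧
    F {0} = (2 : ℝ) ^ (1 / α) ∧
    F {1} = (2 : ℝ) ^ (1 / α) ∧
    F ∅ = 2 ∧
    F Finset.univ = 2 := by
  have hexp_pos : 0 < 1 / α := by positivity
  have hexp_le : 1 / α ≤ 1 := div_le_one_of_le₀ hα.le (by positivity)
  obtain ⟨hsplit, hmin, hsingleton, hempty, huniv⟩ := union_split_tightness_general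
    (Fintype.card_fin 2) (fun n => (n : ℝ) ^ (1 / α))
    (mod_cast zero_rpow_add_two_rpow_le_two_nsmul_one_rpow hexp_pos hexp_le)
  simp only [Nat.cast_zero, Nat.cast_one, Nat.cast_ofNat, Real.zero_rpow hexp_pos.ne',
    Real.one_rpow, zero_add, nsmul_eq_mul, mul_one] at hsplit hmin hsingleton hempty huniv
  exact ⟨hsplit, hmin, hsingleton 0, hsingleton 1, hempty, huniv⟩
end

section
/- ('Grow' superdifferential bound.) Let V be a finite set and let f : 2^V → ℝ be submodular. For all A, Y ⊆ V: f(Y) ≤ f(A) − Σ_{j ∈ A \ Y} ( f(V) − f(V \ {j}) ) + Σ_{j ∈ Y \ A} ( f(A ∪ {j}) − f(A) ). Moreover this modular upper bound is tight at Y = A. -/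
/-!
Submodularity is diminishing returns: enlarging a set can only lower the gain from adding new
elements to it. Go from `A` up to `A ∪ Y` by adding the elements of `Y \ A` one at a time: each
gain is at most the gain over `A` alone. Then go from `Y` up to `A ∪ Y` by adding the elements of
`A \ Y`: each gain is at least the gain of adding that element last, after all the others.
Comparing the two estimates for `f (A ∪ Y)` gives the bound.
-/

/-- A submodular set function on the finite subsets of `V`. The ground set may be infinite, and the
values may lie in any additive structure with an order relation. -/
def IsSubmodular {V G : Type*} [DecidableEq V] [Add G] [LE G] (f : Finset V → G) : Prop :=
  ∀ X Y : Finset V, f (X ∪ Y) + f (X ∩ Y) ≤ f X + f Y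

namespace IsSubmodular

variable {V G : Type*} [DecidableEq V] [AddCommGroup G] [PartialOrder G] [IsOrderedAddMonoid G]
  {f : Finset V → G}

theorem union_sub_le_union_sub (hf : IsSubmodular f) {X Z S : Finset V} (hXZ : X ⊆ Z)
    (hSZ : S ∩ Z ⊆ X) : f (Z ∪ S) - f Z ≤ f (X ∪ S) - f X := by
  have union_eq : (X ∪ S) ∪ Z = Z ∪ S := by grind
  have inter_eq : (X ∪ S) ∩ Z = X := by grind
  rw [sub_le_sub_iff]
  simpa only [union_eq, inter_eq] using hf (X ∪ S) Z

theorem union_sub_le_sum_union_singleton_sub (hf : IsSubmodular f) (A S : Finset V) :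
    f (A ∪ S) - f A ≤ ∑ j ∈ S, (f (A ∪ {j}) - f A) := by
  induction S using Finset.induction_on with
  | empty => simp
  | insert a S ha ih =>
    have gain_le : f (A ∪ S ∪ {a}) - f (A ∪ S) ≤ f (A ∪ {a}) - f A :=
      hf.union_sub_le_union_sub Finset.subset_union_left (by grind)
    calc f (A ∪ insert a S) - f A
        = (f (A ∪ S ∪ {a}) - f (A ∪ S)) + (f (A ∪ S) - f A) := by
          rw [sub_add_sub_cancel, Finset.union_assoc, Finset.union_singleton]
      _ ≤ (f (A ∪ {a}) - f A) + ∑ j ∈ S, (f (A ∪ {j}) - f A) := add_le_add gain_le ih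
      _ = ∑ j ∈ insert a S, (f (A ∪ {j}) - f A) := by rw [Finset.sum_insert ha]

theorem sum_sub_erase_le_union_sub (hf : IsSubmodular f) {U Y S : Finset V} (hYU : Y ⊆ U)
    (hSU : S ⊆ U) (hYS : Disjoint Y S) :
    ∑ j ∈ S, (f U - f (U.erase j)) ≤ f (Y ∪ S) - f Y := by
  induction S using Finset.induction_on with
  | empty => simp
  | insert a S ha ih =>
    obtain ⟨haU, hSU⟩ := Finset.insert_subset_iff.mp hSU
    obtain ⟨haY, hYS⟩ := Finset.disjoint_insert_right.mp hYS
    have le_gain : f U - f (U.erase a) ≤ f (Y ∪ S ∪ {a}) - f (Y ∪ S) := by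
      have erase_union : U.erase a ∪ {a} = U := by
        rw [Finset.union_singleton, Finset.insert_erase haU]
      simpa only [erase_union] using
        hf.union_sub_le_union_sub (X := Y ∪ S) (Z := U.erase a) (S := {a}) (by grind) (by grind)
    calc ∑ j ∈ insert a S, (f U - f (U.erase j))
        = (f U - f (U.erase a)) + ∑ j ∈ S, (f U - f (U.erase j)) := Finset.sum_insert ha
      _ ≤ (f (Y ∪ S ∪ {a}) - f (Y ∪ S)) + (f (Y ∪ S) - f Y) := add_le_add le_gain (ih hSU hYS)
      _ = f (Y ∪ insert a S) - f Y := by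
          rw [sub_add_sub_cancel, Finset.union_assoc, Finset.union_singleton]

end IsSubmodular

theorem grow_superdifferential_bound_general {V G : Type*} [DecidableEq V] [AddCommGroup G]
    [PartialOrder G] [IsOrderedAddMonoid G] {f : Finset V → G} (hf : IsSubmodular f)
    (U : Finset V) :
    (∀ A ⊆ U, ∀ Y ⊆ U,
      f Y ≤ f A - (∑ j ∈ A \ Y, (f U - f (U.erase j))) + (∑ j ∈ Y \ A, (f (A ∪ {j}) - f A))) ∧
    (∀ A : Finset V,
      f A - (∑ j ∈ A \ A, (f U - f (U.erase j))) + (∑ j ∈ A \ A, (f (A ∪ {j}) - f A)) = f A) := by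
  refine ⟨fun A hA Y hY => ?_, fun A => by simp⟩
  have le_gain : ∑ j ∈ A \ Y, (f U - f (U.erase j)) ≤ f (A ∪ Y) - f Y := by
    simpa only [Finset.union_sdiff_self_eq_union, Finset.union_comm Y A] using
      hf.sum_sub_erase_le_union_sub hY (Finset.sdiff_subset.trans hA) Finset.disjoint_sdiff
  have gain_le : f (A ∪ Y) - f A ≤ ∑ j ∈ Y \ A, (f (A ∪ {j}) - f A) := by
    simpa only [Finset.union_sdiff_self_eq_union] using
      hf.union_sub_le_sum_union_singleton_sub A (Y \ A)
  calc f Y = f A - (f (A ∪ Y) - f Y) + (f (A ∪ Y) - f A) := by abel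
    _ ≤ _ := add_le_add (sub_le_sub_left le_gain _) gain_le

/-- "Grow" superdifferential modular upper bound for a submodular function:
`f(Y) ≤ f(A) − Σ_{j ∈ A\Y} (f(V) − f(V\{j})) + Σ_{j ∈ Y\A} (f(A ∪ {j}) − f(A))`,
with equality (tightness) at `Y = A`. -/
theorem grow_superdifferential_bound
    {V : Type*} [Fintype V] [DecidableEq V] (f : Finset V → ℝ)
    (hsubmod : ∀ X Y : Finset V, f (X ∪ Y) + f (X ∩ Y) ≤ f X + f Y) :
    (∀ A Y : Finset V,
      f Y ≤ f A - (∑ j ∈ A \ Y, (f Finset.univ - f (Finset.univ.erase j)))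
              + (∑ j ∈ Y \ A, (f (A ∪ {j}) - f A))) ∧
    (∀ A : Finset V,
      f A - (∑ j ∈ A \ A, (f Finset.univ - f (Finset.univ.erase j)))
          + (∑ j ∈ A \ A, (f (A ∪ {j}) - f A)) = f A) := by
  obtain ⟨bound, tight⟩ := grow_superdifferential_bound_general (f := f) hsubmod Finset.univ
  exact ⟨fun A Y => bound A A.subset_univ Y Y.subset_univ, tight⟩
end

section
/- (Major-Min approximation guarantee.) Let V be a finite set, let f₁, …, f_m be positive polymatroid functions on 2^V, let B₁, …, B_m ⊆ V, and let 𝒞 ⊆ 2^V be a nonempty constraint family. Define F(A) = Σ_{i=1}^m f_i(A △ B_i) and the modular surrogate F̂(A) = Σ_{i=1}^m Σ_{j ∈ A △ B_i} f_i({j}). Let Â ∈ 𝒞 minimize F̂ over 𝒞 and let A* ∈ 𝒞 minimize F over 𝒞, and suppose A* △ B_i ≠ ∅ for all i. Then F(Â) ≤ [ max_{1 ≤ i ≤ m} |A* △ B_i| / ( 1 + (|A* △ B_i| − 1)(1 − κ_{f_i}(A* △ B_i)) ) ] · F(A*), where κ_f(Y) := 1 − min_{j ∈ Y} ( f(Y)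 − f(Y \ {j}) ) / f({j}). -/
/-!
A normalized submodular `f` satisfies `f X ≤ ∑ j ∈ X, f {j}`, so the modular surrogate majorizes
the objective. Conversely, by diminishing returns, building `Y` up from `{k}` gains at least the
marginal `f Y - f (Y \ {j}) ≥ (1 - κ) f {j}` for every other `j ∈ Y`, whence
`f {k} + (1 - κ) ∑ j ∈ Y \ {k}, f {j} ≤ f Y`. Averaging over `k ∈ Y` bounds the surrogate at `Y` by
`|Y| / (1 + (|Y| - 1) (1 - κ))` times `f Y`, and comparing surrogate values transfers this bound
from `A*` to `Â`.
-/

open Finset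

section SetFunction

variable {V R : Type*} [DecidableEq V]

/-- Submodularity of a set function, as an inequality between the values on a pair of sets and on
its union and intersection. -/
def Submodular [Add R] [LE R] (f : Finset V → R) : Prop :=
  ∀ X Y, f (X ∪ Y) + f (X ∩ Y) ≤ f X + f Y

/-- Positive polymatroid functions: the normalized, monotone, submodular set functions that are
positive on nonempty sets. The ground set `V` may be infinite; only finite subsets are evaluated. -/
structure IsPositivePolymatroid [AddZeroClass R] [Preorder R] (f : Finset V → R) : Prop where
  pos : ∀ ⦃X : Finset V⦄, X.Nonempty → 0 < f X
  map_empty : f ∅ = 0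
  monotone : Monotone f
  submodular : Submodular f

section Submodular

variable [AddCommGroup R] [PartialOrder R] [IsOrderedAddMonoid R] {f : Finset V → R}

theorem Submodular.le_sum_singleton (hf : Submodular f) (hempty : f ∅ = 0) (X : Finset V) :
    f X ≤ ∑ j ∈ X, f {j} := by
  induction X using Finset.induction_on with
  | empty => simp [hempty]
  | insert a X ha ih =>
    calc
      f (insert a X) = f ({a} ∪ X) + f ({a} ∩ X) := by
        rw [singleton_inter_of_notMem ha, hempty, add_zero, insert_eq]
      _ ≤ f {a} + f X := hf {a} X
      _ ≤ f {a} + ∑ j ∈ X, f {j} := by gcongr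
      _ = ∑ j ∈ insert a X, f {j} := by rw [sum_insert ha]

theorem Submodular.sub_erase_le_sub_erase (hf : Submodular f) {X Y : Finset V} (hXY : X ⊆ Y)
    {j : V} (hj : j ∈ X) : f Y - f (Y.erase j) ≤ f X - f (X.erase j) := by
  have hunion : X ∪ Y.erase j = Y := by grind
  have hinter : X ∩ Y.erase j = X.erase j := by grind
  have hsub := hf X (Y.erase j)
  rw [hunion, hinter] at hsub
  rwa [sub_le_sub_iff]

theorem Submodular.sdiff_add_sum_sub_erase_le (hf : Submodular f) {T Y : Finset V} (hT : T ⊆ Y) :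
    f (Y \ T) + ∑ j ∈ T, (f Y - f (Y.erase j)) ≤ f Y := by
  induction T using Finset.induction_on with
  | empty => simp
  | insert a T ha ih =>
    obtain ⟨haY, hTY⟩ := insert_subset_iff.mp hT
    have hmarginal : f Y - f (Y.erase a) ≤ f (Y \ T) - f (Y \ insert a T) := by
      rw [sdiff_insert]
      exact hf.sub_erase_le_sub_erase sdiff_subset (mem_sdiff.mpr ⟨haY, ha⟩)
    calc
      f (Y \ insert a T) + ∑ j ∈ insert a T, (f Y - f (Y.erase j))
          = f (Y \ insert a T) + (f Y - f (Y.erase a)) + ∑ j ∈ T, (f Y - f (Y.erase j)) := by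
        rw [sum_insert ha, add_assoc]
      _ ≤ f (Y \ T) + ∑ j ∈ T, (f Y - f (Y.erase j)) := by
        gcongr
        exact le_sub_iff_add_le'.mp hmarginal
      _ ≤ f Y := ih hTY

end Submodular

theorem Submodular.sum_singleton_add_card_sub_one_mul_sum_sub_erase_le
    [Ring R] [PartialOrder R] [IsOrderedAddMonoid R] {f : Finset V → R} (hf : Submodular f)
    (Y : Finset V) :
    ∑ k ∈ Y, f {k} + ((#Y : R) - 1) * ∑ j ∈ Y, (f Y - f (Y.erase j)) ≤ #Y * f Y := by
  have hbuild : ∀ k ∈ Y,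
      f {k} + (∑ j ∈ Y, (f Y - f (Y.erase j)) - (f Y - f (Y.erase k))) ≤ f Y := by
    intro k hk
    have hle := hf.sdiff_add_sum_sub_erase_le (erase_subset k Y)
    rwa [sdiff_erase_self hk, sum_erase_eq_sub hk] at hle
  calc
    ∑ k ∈ Y, f {k} + ((#Y : R) - 1) * ∑ j ∈ Y, (f Y - f (Y.erase j))
        = ∑ k ∈ Y, (f {k} + (∑ j ∈ Y, (f Y - f (Y.erase j)) - (f Y - f (Y.erase k)))) := by
      rw [sum_add_distrib, sum_sub_distrib _ (fun k => f Y - f (Y.erase k)), sum_const,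
        nsmul_eq_mul, sub_one_mul]
    _ ≤ ∑ _k ∈ Y, f Y := sum_le_sum hbuild
    _ = #Y * f Y := by rw [sum_const, nsmul_eq_mul]

section Curvature

variable [Field R] [LinearOrder R]

/-- The curvature `κ_f(Y)` of a set function on a nonempty set, measuring its failure to be modular
there: `1 - κ_f(Y)` is the least ratio between a marginal at the top of `Y` and the corresponding
singleton value. -/
def curvature (f : Finset V → R) (Y : Finset V) (hY : Y.Nonempty) : R :=
  1 - Y.inf' hY fun j => (f Y - f (Y.erase j)) / f {j}

/-- The factor `|Y| / (1 + (|Y| - 1) (1 - κ_f(Y)))` by which the modular upper bound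
`∑ j ∈ Y, f {j}` may exceed `f Y`. -/
def curvatureFactor (f : Finset V → R) (Y : Finset V) (hY : Y.Nonempty) : R :=
  #Y / (1 + (#Y - 1) * (1 - curvature f Y hY))

namespace IsPositivePolymatroid

variable [IsStrictOrderedRing R] {f : Finset V → R} {Y : Finset V}

theorem curvature_le_one (hf : IsPositivePolymatroid f) (hY : Y.Nonempty) :
    curvature f Y hY ≤ 1 :=
  sub_le_self 1 <| le_inf' _ _ fun j _ =>
    div_nonneg (sub_nonneg.mpr (hf.monotone (erase_subset j Y))) (hf.pos (singleton_nonempty j)).le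

theorem one_sub_curvature_mul_le (hf : IsPositivePolymatroid f) (hY : Y.Nonempty) {j : V}
    (hj : j ∈ Y) : (1 - curvature f Y hY) * f {j} ≤ f Y - f (Y.erase j) := by
  rw [← le_div_iff₀ (hf.pos (singleton_nonempty j)), curvature, sub_sub_cancel]
  exact inf'_le _ hj

theorem sum_singleton_le_curvatureFactor_mul (hf : IsPositivePolymatroid f) (hY : Y.Nonempty) :
    ∑ j ∈ Y, f {j} ≤ curvatureFactor f Y hY * f Y := by
  have hcard : 0 ≤ (#Y : R) - 1 := sub_nonneg.mpr (mod_cast hY.card_pos)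
  have hdenom : 0 < 1 + ((#Y : R) - 1) * (1 - curvature f Y hY) :=
    add_pos_of_pos_of_nonneg one_pos <|
      mul_nonneg hcard (sub_nonneg.mpr (hf.curvature_le_one hY))
  rw [curvatureFactor, div_mul_eq_mul_div, le_div_iff₀' hdenom]
  calc
    (1 + ((#Y : R) - 1) * (1 - curvature f Y hY)) * ∑ j ∈ Y, f {j}
        = ∑ j ∈ Y, f {j} + (#Y - 1) * ∑ j ∈ Y, (1 - curvature f Y hY) * f {j} := by
      rw [← mul_sum]
      ring
    _ ≤ ∑ j ∈ Y, f {j} + (#Y - 1) * ∑ j ∈ Y, (f Y - f (Y.erase j)) := by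
      gcongr with j hj
      exact hf.one_sub_curvature_mul_le hY hj
    _ ≤ #Y * f Y := hf.submodular.sum_singleton_add_card_sub_one_mul_sum_sub_erase_le Y

end IsPositivePolymatroid

theorem major_min_guarantee_general [IsStrictOrderedRing R] {ι : Type*} [Fintype ι] [Nonempty ι]
    {f : ι → Finset V → R} (hf : ∀ i, IsPositivePolymatroid (f i)) {X Y : ι → Finset V}
    (hsurrogate : ∑ i, ∑ j ∈ X i, f i {j} ≤ ∑ i, ∑ j ∈ Y i, f i {j})
    (hY : ∀ i, (Y i).Nonempty) :
    ∑ i, f i (X i) ≤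
      (univ.sup' univ_nonempty fun i => curvatureFactor (f i) (Y i) (hY i)) *
        ∑ i, f i (Y i) := by
  calc
    ∑ i, f i (X i) ≤ ∑ i, ∑ j ∈ X i, f i {j} := by
      gcongr with i
      exact (hf i).submodular.le_sum_singleton (hf i).map_empty (X i)
    _ ≤ ∑ i, ∑ j ∈ Y i, f i {j} := hsurrogate
    _ ≤ ∑ i, curvatureFactor (f i) (Y i) (hY i) * f i (Y i) := by
      gcongr with i
      exact (hf i).sum_singleton_le_curvatureFactor_mul (hY i)
    _ ≤ ∑ i, (univ.sup' univ_nonempty fun i => curvatureFactor (f i) (Y i) (hY i)) *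
          f i (Y i) := by
      gcongr with i
      · exact ((hf i).pos (hY i)).le
      · exact le_sup' (fun i => curvatureFactor (f i) (Y i) (hY i)) (mem_univ i)
    _ = _ := (mul_sum _ _ _).symm

end Curvature

end SetFunction

/-- Major-Min approximation guarantee: if `Â` minimizes the modular surrogate
`F̂(A) = Σᵢ Σ_{j ∈ A △ Bᵢ} fᵢ({j})` over `𝒞` and `A*` minimizes
`F(A) = Σᵢ fᵢ(A △ Bᵢ)` over `𝒞` (with `A* △ Bᵢ ≠ ∅` for all `i`), then
`F(Â) ≤ (maxᵢ |A* △ Bᵢ| / (1 + (|A* △ Bᵢ| − 1)(1 − κ_{fᵢ}(A* △ Bᵢ)))) · F(A*)`,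
where `1 − κ_f(Y) = min_{j ∈ Y} (f(Y) − f(Y\{j}))/f({j})`. -/
theorem major_min_guarantee
    {V : Type*} [Fintype V] [DecidableEq V]
    (m : ℕ) (hm : 0 < m) (f : Fin m → Finset V → ℝ) (B : Fin m → Finset V)
    (hpos : ∀ i, ∀ A : Finset V, A ≠ ∅ → 0 < f i A)
    (hnorm : ∀ i, f i ∅ = 0)
    (hmono : ∀ i, ∀ X Y : Finset V, X ⊆ Y → f i X ≤ f i Y)
    (hsubmod : ∀ i, ∀ X Y : Finset V, f i (X ∪ Y) + f i (X ∩ Y) ≤ f i X + f i Y)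
    (𝒞 : Set (Finset V))
    (Ahat : Finset V) (hAhat : Ahat ∈ 𝒞)
    (hAhatMin : ∀ A ∈ 𝒞, (∑ i, ∑ j ∈ (Ahat \ B i) ∪ (B i \ Ahat), f i {j}) ≤
                          (∑ i, ∑ j ∈ (A \ B i) ∪ (B i \ A), f i {j}))
    (Astar : Finset V) (hAstar : Astar ∈ 𝒞)
    (hAstarMin : ∀ A ∈ 𝒞, (∑ i, f i ((Astar \ B i) ∪ (B i \ Astar))) ≤
                           (∑ i, f i ((A \ B i) ∪ (B i \ A))))
    (hne : ∀ i, ((Astar \ B i) ∪ (B i \ Astar)).Nonempty) :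
    (∑ i, f i ((Ahat \ B i) ∪ (B i \ Ahat))) ≤
      (Finset.univ.sup' (Finset.univ_nonempty_iff.mpr ⟨⟨0, hm⟩⟩) fun i =>
        ((((Astar \ B i) ∪ (B i \ Astar)).card : ℝ) /
          (1 + ((((Astar \ B i) ∪ (B i \ Astar)).card : ℝ) - 1) *
            (((Astar \ B i) ∪ (B i \ Astar)).inf' (hne i) fun j =>
              (f i ((Astar \ B i) ∪ (B i \ Astar)) -
               f i (((Astar \ B i) ∪ (B i \ Astar)).erase j)) / f i {j})))) *
      (∑ i, f i ((Astar \ B i) ∪ (B i \ Astar))) := by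
  have : Nonempty (Fin m) := Fin.pos_iff_nonempty.mp hm
  have hf (i : Fin m) : IsPositivePolymatroid (f i) :=
    ⟨fun X hX => hpos i X hX.ne_empty, hnorm i, hmono i, hsubmod i⟩
  simpa only [curvatureFactor, curvature, sub_sub_cancel] using
    major_min_guarantee_general hf (hAhatMin Astar hAstar) hne
end

section
/- (A random subset is a 1/8-approximation for unconstrained SH-max in expectation.) Let V be a finite set with n elements, let f₁, …, f_m be positive polymatroid functions on 2^V, let B₁, …, B_m ⊆ V, and define F(A) = Σ_{i=1}^m f_i(A △ B_i). If R is a uniformly random subset of V, then E[F(R)] = 2^{−n} Σ_{R ⊆ V} F(R) ≥ (1/8) · max_{A ⊆ V} F(A). -/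
/-!
Both `R ↦ R ∆ B` and `R ↦ Rᶜ` preserve the uniform distribution on the subsets of `V`. Hence, for
monotone subadditive `f`, averaging `f (A ∆ B) ≤ f V ≤ f R + f Rᶜ` over `R` gives
`f (A ∆ B) ≤ 2 𝔼 f R = 2 𝔼 f (R ∆ B)`. Summing over the functions `fᵢ` yields the factor `1 / 2`.
-/

open Finset
open scoped BigOperators symmDiff

section Submodular

variable {L M : Type*} [Lattice L] [AddCommMonoid M] [PartialOrder M] [IsOrderedAddMonoid M]

theorem apply_sup_le_add_of_submodular {f : L → M} (hnonneg : ∀ a, 0 ≤ f a)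
    (hsubmod : ∀ a b, f (a ⊔ b) + f (a ⊓ b) ≤ f a + f b) (a b : L) :
    f (a ⊔ b) ≤ f a + f b :=
  (le_add_of_nonneg_right (hnonneg _)).trans (hsubmod a b)

end Submodular

section BooleanAlgebra

variable {α : Type*} [BooleanAlgebra α]

theorem apply_le_add_apply_compl {M : Type*} [Add M] [Preorder M] {f : α → M}
    (hmono : Monotone f) (hsubadd : ∀ a b, f (a ⊔ b) ≤ f a + f b) (x a : α) :
    f x ≤ f a + f aᶜ :=
  calc
    f x ≤ f (a ⊔ aᶜ) := hmono (by simp only [sup_compl_eq_top, le_top])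
    _ ≤ f a + f aᶜ := hsubadd a aᶜ

variable [Fintype α]

section Expect

variable {M : Type*} [AddCommMonoid M] [Module ℚ≥0 M]

theorem expect_apply_symmDiff_right (f : α → M) (b : α) : 𝔼 a, f (a ∆ b) = 𝔼 a, f a :=
  Fintype.expect_bijective (· ∆ b) (symmDiff_left_involutive b).bijective _ _ fun _ ↦ rfl

theorem expect_apply_compl (f : α → M) : 𝔼 a, f aᶜ = 𝔼 a, f a :=
  Fintype.expect_bijective compl compl_bijective _ _ fun _ ↦ rfl

end Expect

variable {𝕜 : Type*} [Field 𝕜] [LinearOrder 𝕜] [IsStrictOrderedRing 𝕜]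

theorem le_two_mul_expect_of_le_add_compl {f : α → 𝕜} {c : 𝕜} (h : ∀ a, c ≤ f a + f aᶜ) :
    c ≤ 2 * 𝔼 a, f a :=
  calc
    c = 𝔼 _a : α, c := (Fintype.expect_const c).symm
    _ ≤ 𝔼 a, (f a + f aᶜ) := expect_le_expect fun a _ ↦ h a
    _ = 2 * 𝔼 a, f a := by rw [expect_add_distrib, expect_apply_compl, two_mul]

theorem random_subset_eighth_approx_general {ι : Type*} [Fintype ι] {f : ι → α → 𝕜}
    (hmono : ∀ i, Monotone (f i)) (hsubadd : ∀ i a b, f i (a ⊔ b) ≤ f i a + f i b)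
    (b : ι → α) (a : α) :
    (1 / 2) * ∑ i, f i (a ∆ b i) ≤ 𝔼 r, ∑ i, f i (r ∆ b i) := by
  rw [expect_sum_comm, mul_sum]
  refine sum_le_sum fun i _ ↦ ?_
  have le_twice_mean : f i (a ∆ b i) ≤ 2 * 𝔼 r, f i r :=
    le_two_mul_expect_of_le_add_compl (apply_le_add_apply_compl (hmono i) (hsubadd i) _)
  rw [expect_apply_symmDiff_right]
  linarith

end BooleanAlgebra

/-- A uniformly random subset is a 1/8-approximation in expectation for
unconstrained SH-max: with `F(A) = Σᵢ fᵢ(A △ Bᵢ)` for positive polymatroids `fᵢ`,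
`2^{-n} Σ_{R ⊆ V} F(R) ≥ (1/8) · max_{A ⊆ V} F(A)`. -/
theorem random_subset_eighth_approx
    {V : Type*} [Fintype V] [DecidableEq V]
    (m : ℕ) (f : Fin m → Finset V → ℝ) (B : Fin m → Finset V)
    (hpos : ∀ i, ∀ A : Finset V, A ≠ ∅ → 0 < f i A)
    (hnorm : ∀ i, f i ∅ = 0)
    (hmono : ∀ i, ∀ X Y : Finset V, X ⊆ Y → f i X ≤ f i Y)
    (hsubmod : ∀ i, ∀ X Y : Finset V, f i (X ∪ Y) + f i (X ∩ Y) ≤ f i X + f i Y) :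
    let F : Finset V → ℝ := fun A => ∑ i, f i ((A \ B i) ∪ (B i \ A))
    ∀ A : Finset V,
      (1 / 8) * F A ≤ ((2 : ℝ) ^ (Fintype.card V))⁻¹ * ∑ R : Finset V, F R := by
  intro F A
  have hnonneg (i : Fin m) (X : Finset V) : 0 ≤ f i X :=
    (hnorm i).ge.trans (hmono i ∅ X X.empty_subset)
  have hF : 0 ≤ F A := sum_nonneg fun i _ ↦ hnonneg i _
  calc
    (1 / 8) * F A ≤ (1 / 2) * F A := by gcongr; norm_num
    _ ≤ 𝔼 R, F R := random_subset_eighth_approx_general (fun i X Y ↦ hmono i X Y)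
        (fun i ↦ apply_sup_le_add_of_submodular (hnonneg i) (hsubmod i)) B A
    _ = ((2 : ℝ) ^ (Fintype.card V))⁻¹ * ∑ R : Finset V, F R := by
      rw [Fintype.expect_eq_sum_div_card, Fintype.card_finset, Nat.cast_pow, Nat.cast_ofNat,
        div_eq_inv_mul]
end

section
/- Let G = (V, E) be a finite undirected graph, let k > 1, let γ₂ > 0, and let γ₁ := (2^k − 1)·γ₂ (so that (γ₁ + γ₂)^{1/k} = 2·γ₂^{1/k} and γ₁ > γ₂). For each edge e = {u, v} ∈ E define f_{1e}(Y) = (γ₁|Y ∩ {u}| + γ₂|Y ∩ {v}|)^{1/k}, f_{2e}(Y) = (γ₂|Y ∩ {u}| + γ₁|Y ∩ {v}|)^{1/k}, h_e(A) = f_{1e}(A △ {u}) + f_{2e}(A △ {v}), and F^c(A) = Σ_{e ∈ E} h_e(A). Then for every edge e = {u,v}, h_e(A) = 2·γ₂^{1/k} if A contains at least one of u, v, and h_e(A) = 2·γ₁^{1/k} otherwise; consequently F^c(A) ≥ 2|E|·γ₂^{1/k} for all A ⊆ V, and A minimizes F^c over 2^V if and only if A is a vertex cover of G. -/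
/-!
Only the position of `u` and `v` relative to `A` matters for the cost of the edge `{u, v}`, and the
root function `φ x = x ^ (1 / k)` enters only through `φ 0 = 0`, `φ (γ₁ + γ₂) = 2 * φ γ₂` and
`φ γ₂ < φ γ₁`. If `A` contains both endpoints, each flip leaves the weight `γ₂`; if it contains
exactly one, one flip leaves nothing and the other leaves `γ₁ + γ₂`; if it contains neither, each
flip leaves `γ₁`. So the edge costs `2 * φ γ₂` when covered and the larger `2 * φ γ₁` when not.
A vertex cover attains the least cost on all edges at once, so the minimizers of the total cost are
exactly the sets that attain it on every edge.
-/

open scoped symmDiff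

section SumMinimizers

variable {ι α M : Type*} [AddCommMonoid M] [PartialOrder M] [IsOrderedCancelAddMonoid M]

theorem forall_sum_le_sum_iff_forall_eq {s : Finset ι} {f : ι → α → M} {m : ι → M}
    (hm : ∀ i ∈ s, ∀ y, m i ≤ f i y) {x₀ : α} (hx₀ : ∀ i ∈ s, f i x₀ = m i) (x : α) :
    (∀ y, ∑ i ∈ s, f i x ≤ ∑ i ∈ s, f i y) ↔ ∀ i ∈ s, f i x = m i := by
  have sum_le (y : α) : ∑ i ∈ s, m i ≤ ∑ i ∈ s, f i y :=
    Finset.sum_le_sum fun i hi => hm i hi y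
  constructor
  · intro hmin i hi
    have sum_eq : ∑ i ∈ s, m i = ∑ i ∈ s, f i x :=
      (sum_le x).antisymm ((hmin x₀).trans_eq (Finset.sum_congr rfl hx₀))
    exact ((Finset.sum_eq_sum_iff_of_le fun i hi => hm i hi x).1 sum_eq i hi).symm
  · intro hx y
    exact (Finset.sum_congr rfl hx).trans_le (sum_le y)

end SumMinimizers

section Gadget

variable {V : Type*} [DecidableEq V]

/-- The function `Y ↦ φ (a |Y ∩ {u}| + b |Y ∩ {v}|)`. The functions `f_{1e}` and `f_{2e}` are the
case `φ x = x ^ (1 / k)` with `(a, b) = (γ₁, γ₂)` and `(a, b) = (γ₂, γ₁)`. -/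
def pairCost (φ : ℝ → ℝ) (a b : ℝ) (u v : V) (Y : Finset V) : ℝ :=
  φ (a * (if u ∈ Y then 1 else 0) + b * (if v ∈ Y then 1 else 0))

/-- The cost `h_e` of the edge `e = {u, v}`, with a general function `φ` in place of the `k`-th root
and general weights `a`, `b` in place of `γ₁`, `γ₂`. -/
def edgeCost (φ : ℝ → ℝ) (a b : ℝ) (u v : V) (A : Finset V) : ℝ :=
  pairCost φ a b u v (A ∆ {u}) + pairCost φ b a u v (A ∆ {v})

/-- The total cost `F^c` of `A`. Edges are given as ordered pairs; the orientation is irrelevant by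
`edgeCost_swap`. -/
def totalCost (φ : ℝ → ℝ) (a b : ℝ) (E : Finset (V × V)) (A : Finset V) : ℝ :=
  ∑ e ∈ E, edgeCost φ a b e.1 e.2 A

variable {φ : ℝ → ℝ} {a b : ℝ} {u v : V} {A : Finset V}

theorem pairCost_swap (φ : ℝ → ℝ) (a b : ℝ) (u v : V) (Y : Finset V) :
    pairCost φ b a v u Y = pairCost φ a b u v Y :=
  congrArg φ (add_comm _ _)

theorem edgeCost_swap (φ : ℝ → ℝ) (a b : ℝ) (u v : V) (A : Finset V) :
    edgeCost φ a b v u A = edgeCost φ a b u v A := by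
  rw [edgeCost, pairCost_swap φ b a u v, pairCost_swap φ a b u v, add_comm, edgeCost]

theorem edgeCost_of_mem_of_mem (huv : u ≠ v) (hu : u ∈ A) (hv : v ∈ A) :
    edgeCost φ a b u v A = 2 * φ b := by
  simp [edgeCost, pairCost, Finset.mem_symmDiff, hu, hv, huv, huv.symm, two_mul]

theorem edgeCost_of_mem_of_notMem (huv : u ≠ v) (hu : u ∈ A) (hv : v ∉ A) :
    edgeCost φ a b u v A = φ 0 + φ (a + b) := by
  simp [edgeCost, pairCost, Finset.mem_symmDiff, hu, hv, huv, huv.symm, add_comm b a]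

theorem edgeCost_of_notMem_of_notMem (huv : u ≠ v) (hu : u ∉ A) (hv : v ∉ A) :
    edgeCost φ a b u v A = 2 * φ a := by
  simp [edgeCost, pairCost, Finset.mem_symmDiff, hu, hv, huv, huv.symm, two_mul]

theorem edgeCost_of_mem_or_mem (hφ₀ : φ 0 = 0) (hφ_add : φ (a + b) = 2 * φ b) (huv : u ≠ v)
    (hA : u ∈ A ∨ v ∈ A) : edgeCost φ a b u v A = 2 * φ b := by
  by_cases hu : u ∈ A <;> by_cases hv : v ∈ A
  · exact edgeCost_of_mem_of_mem huv hu hv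
  · rw [edgeCost_of_mem_of_notMem huv hu hv, hφ₀, hφ_add, zero_add]
  · rw [← edgeCost_swap, edgeCost_of_mem_of_notMem huv.symm hv hu, hφ₀, hφ_add, zero_add]
  · exact absurd hA (not_or.2 ⟨hu, hv⟩)

theorem two_mul_le_edgeCost (hφ₀ : φ 0 = 0) (hφ_add : φ (a + b) = 2 * φ b) (hφ_le : φ b ≤ φ a)
    (huv : u ≠ v) (A : Finset V) : 2 * φ b ≤ edgeCost φ a b u v A := by
  by_cases hA : u ∈ A ∨ v ∈ A
  · exact (edgeCost_of_mem_or_mem hφ₀ hφ_add huv hA).ge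
  · obtain ⟨hu, hv⟩ := not_or.1 hA
    rw [edgeCost_of_notMem_of_notMem huv hu hv]
    linarith

theorem edgeCost_eq_two_mul_iff (hφ₀ : φ 0 = 0) (hφ_add : φ (a + b) = 2 * φ b)
    (hφ_ne : φ a ≠ φ b) (huv : u ≠ v) :
    edgeCost φ a b u v A = 2 * φ b ↔ u ∈ A ∨ v ∈ A := by
  refine ⟨fun hcost => ?_, edgeCost_of_mem_or_mem hφ₀ hφ_add huv⟩
  by_contra hA
  obtain ⟨hu, hv⟩ := not_or.1 hA
  rw [edgeCost_of_notMem_of_notMem huv hu hv] at hcost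
  exact hφ_ne (mul_left_cancel₀ two_ne_zero hcost)

theorem two_mul_card_mul_le_totalCost {E : Finset (V × V)} (hE : ∀ e ∈ E, e.1 ≠ e.2)
    (hφ₀ : φ 0 = 0) (hφ_add : φ (a + b) = 2 * φ b) (hφ_le : φ b ≤ φ a) (A : Finset V) :
    2 * (E.card : ℝ) * φ b ≤ totalCost φ a b E A :=
  calc
    2 * (E.card : ℝ) * φ b = E.card • (2 * φ b) := by rw [nsmul_eq_mul]; ring
    _ ≤ totalCost φ a b E A :=
      E.card_nsmul_le_sum _ _ fun e he => two_mul_le_edgeCost hφ₀ hφ_add hφ_le (hE e he) A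

theorem forall_totalCost_le_iff {E : Finset (V × V)} (hE : ∀ e ∈ E, e.1 ≠ e.2)
    (hφ₀ : φ 0 = 0) (hφ_add : φ (a + b) = 2 * φ b) (hφ_lt : φ b < φ a) (A : Finset V) :
    (∀ A', totalCost φ a b E A ≤ totalCost φ a b E A') ↔ ∀ e ∈ E, e.1 ∈ A ∨ e.2 ∈ A := by
  have image_fst_attains (e) (he : e ∈ E) :
      edgeCost φ a b e.1 e.2 (E.image Prod.fst) = 2 * φ b :=
    edgeCost_of_mem_or_mem hφ₀ hφ_add (hE e he) (.inl (Finset.mem_image_of_mem _ he))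
  have minimizer_iff :=
    forall_sum_le_sum_iff_forall_eq (f := fun e : V × V => edgeCost φ a b e.1 e.2)
      (fun e he => two_mul_le_edgeCost hφ₀ hφ_add hφ_lt.le (hE e he)) image_fst_attains A
  exact minimizer_iff.trans <| forall₂_congr fun e he =>
    edgeCost_eq_two_mul_iff hφ₀ hφ_add hφ_lt.ne' (hE e he)

theorem vertex_cover_gadget_general (E : Finset (V × V)) (hE : ∀ e ∈ E, e.1 ≠ e.2)
    (hφ₀ : φ 0 = 0) (hφ_add : φ (a + b) = 2 * φ b) (hφ_lt : φ b < φ a) :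
    (∀ e ∈ E, ∀ A : Finset V,
      ((e.1 ∈ A ∨ e.2 ∈ A) → edgeCost φ a b e.1 e.2 A = 2 * φ b) ∧
      ((e.1 ∉ A ∧ e.2 ∉ A) → edgeCost φ a b e.1 e.2 A = 2 * φ a)) ∧
    (∀ A : Finset V, 2 * (E.card : ℝ) * φ b ≤ totalCost φ a b E A) ∧
    (∀ A : Finset V, (∀ A' : Finset V, totalCost φ a b E A ≤ totalCost φ a b E A') ↔
      (∀ e ∈ E, e.1 ∈ A ∨ e.2 ∈ A)) :=
  ⟨fun e he _ => ⟨edgeCost_of_mem_or_mem hφ₀ hφ_add (hE e he),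
      fun hA => edgeCost_of_notMem_of_notMem (hE e he) hA.1 hA.2⟩,
    two_mul_card_mul_le_totalCost hE hφ₀ hφ_add hφ_lt.le,
    forall_totalCost_le_iff hE hφ₀ hφ_add hφ_lt⟩

end Gadget

section RootWeights

variable {k γ : ℝ}

theorem two_rpow_sub_one_mul_add_rpow_one_div (hk : k ≠ 0) (hγ : 0 ≤ γ) :
    (((2 : ℝ) ^ k - 1) * γ + γ) ^ (1 / k) = 2 * γ ^ (1 / k) :=
  calc
    (((2 : ℝ) ^ k - 1) * γ + γ) ^ (1 / k) = ((2 : ℝ) ^ k * γ) ^ (1 / k) := by ring_nf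
    _ = ((2 : ℝ) ^ k) ^ (1 / k) * γ ^ (1 / k) := Real.mul_rpow (by positivity) hγ
    _ = 2 * γ ^ (1 / k) := by rw [one_div, Real.rpow_rpow_inv zero_le_two hk]

theorem lt_two_rpow_sub_one_mul (hk : 1 < k) (hγ : 0 < γ) : γ < ((2 : ℝ) ^ k - 1) * γ := by
  have two_lt : (2 : ℝ) < 2 ^ k := Real.self_lt_rpow_of_one_lt one_lt_two hk
  exact lt_mul_of_one_lt_left hγ (by linarith)

end RootWeights

/-- The vertex-cover gadget: with `γ₁ = (2^k − 1)γ₂` and, for each edge `e = (u,v)`,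
`h_e(A) = f_{1e}(A △ {u}) + f_{2e}(A △ {v})` where
`f_{1e}(Y) = (γ₁[u ∈ Y] + γ₂[v ∈ Y])^{1/k}` and `f_{2e}(Y) = (γ₂[u ∈ Y] + γ₁[v ∈ Y])^{1/k}`,
each `h_e(A)` equals `2γ₂^{1/k}` if `A` covers `e` and `2γ₁^{1/k}` otherwise; hence
`F^c(A) = Σ_e h_e(A) ≥ 2|E|γ₂^{1/k}`, and `A` minimizes `F^c` iff `A` is a vertex cover. -/
theorem vertex_cover_gadget
    {V : Type*} [Fintype V] [DecidableEq V]
    (E : Finset (V × V)) (hE : ∀ e ∈ E, e.1 ≠ e.2)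
    (k : ℝ) (hk : 1 < k) (γ₂ : ℝ) (hγ₂ : 0 < γ₂) :
    let γ₁ : ℝ := ((2 : ℝ) ^ k - 1) * γ₂
    let f₁ : V × V → Finset V → ℝ := fun e Y =>
      (γ₁ * (if e.1 ∈ Y then (1 : ℝ) else 0) + γ₂ * (if e.2 ∈ Y then (1 : ℝ) else 0)) ^ (1 / k)
    let f₂ : V × V → Finset V → ℝ := fun e Y =>
      (γ₂ * (if e.1 ∈ Y then (1 : ℝ) else 0) + γ₁ * (if e.2 ∈ Y then (1 : ℝ) else 0)) ^ (1 / k)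
    let h : V × V → Finset V → ℝ := fun e A =>
      f₁ e ((A \ {e.1}) ∪ ({e.1} \ A)) + f₂ e ((A \ {e.2}) ∪ ({e.2} \ A))
    let Fc : Finset V → ℝ := fun A => ∑ e ∈ E, h e A
    (∀ e ∈ E, ∀ A : Finset V,
      ((e.1 ∈ A ∨ e.2 ∈ A) → h e A = 2 * γ₂ ^ (1 / k)) ∧
      ((e.1 ∉ A ∧ e.2 ∉ A) → h e A = 2 * γ₁ ^ (1 / k))) ∧
    (∀ A : Finset V, 2 * (E.card : ℝ) * γ₂ ^ (1 / k) ≤ Fc A) ∧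
    (∀ A : Finset V, (∀ A' : Finset V, Fc A ≤ Fc A') ↔ (∀ e ∈ E, e.1 ∈ A ∨ e.2 ∈ A)) := by
  have hk₀ : 0 < k := one_pos.trans hk
  exact vertex_cover_gadget_general (φ := (· ^ (1 / k))) E hE
    (Real.zero_rpow (one_div_pos.2 hk₀).ne')
    (two_rpow_sub_one_mul_add_rpow_one_div hk₀.ne' hγ₂.le)
    (Real.rpow_lt_rpow hγ₂.le (lt_two_rpow_sub_one_mul hk hγ₂) (one_div_pos.2 hk₀))
end

section
/- Let G = (V, E) be a finite undirected graph with E ≠ ∅, let k > 1, let γ₂ > 0, and let γ₁ := (2^k − 1)·γ₂. For each edge e = {u, v} ∈ E define f_{1e}(Y) = (γ₁|Y ∩ {u}| + γ₂|Y ∩ {v}|)^{1/k}, f_{2e}(Y) = (γ₂|Y ∩ {u}| + γ₁|Y ∩ {v}|)^{1/k}, h_e(A) = f_{1e}(A △ {u}) + f_{2e}(A △ {v}), and F^c(A) = Σ_{e ∈ E} h_e(A). Let g : 2^V → ℝ be monotone with unit increments bounded by c ≥ 0, i.e., 0 ≤ g(A ∪ {u}) − g(A) ≤ c for all A ⊆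 V and u ∈ V, and suppose 2(γ₁^{1/k} − γ₂^{1/k}) > c. Then every minimizer of A ↦ g(A) + F^c(A) over 2^V is a vertex cover of G. -/
/-!
A covered edge costs `2 γ₂^{1/k}` and an uncovered one `2 γ₁^{1/k}`: the choice of `γ₁` makes
`(γ₁ + γ₂)^{1/k} = 2 γ₂^{1/k}`, so that covering an edge once or twice costs the same. Adding an
endpoint of an uncovered edge thus lowers the cost of that edge by `2 (γ₁^{1/k} - γ₂^{1/k})`,
raises the cost of no other edge, and raises `g` by less than this amount.

The argument works for any `ρ` in place of `x ↦ x^{1/k}` with `ρ 0 = 0`, `ρ (γ₁ + γ₂) = 2 ρ γ₂`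
and `ρ γ₁ ≤ ρ (γ₁ + γ₂)`. It tolerates loops: covering one lowers its cost from
`2 ρ (γ₁ + γ₂) ≥ 2 ρ γ₁` to `0`.
-/

open scoped symmDiff

section EdgeGadget

variable {V : Type*} [DecidableEq V] {ρ : ℝ → ℝ} {a b : ℝ} {e : V × V} {A B : Finset V}

/-- The modular weight `a |Y ∩ {u}| + b |Y ∩ {v}|` of a vertex set `Y` on the pair `e = (u, v)`;
both terms count on a loop. -/
def pairWeight (a b : ℝ) (e : V × V) (Y : Finset V) : ℝ :=
  a * (if e.1 ∈ Y then 1 else 0) + b * (if e.2 ∈ Y then 1 else 0)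

/-- The cost `h_e(A) = f_{1e}(A △ {u}) + f_{2e}(A △ {v})` of the edge `e = (u, v)`, with an
arbitrary function `ρ` in place of the `k`-th root, and `a`, `b` in place of `γ₁`, `γ₂`. -/
def edgeGadget (ρ : ℝ → ℝ) (a b : ℝ) (e : V × V) (A : Finset V) : ℝ :=
  ρ (pairWeight a b e (A ∆ {e.1})) + ρ (pairWeight b a e (A ∆ {e.2}))

theorem edgeGadget_of_mem_or_mem (hzero : ρ 0 = 0) (hadd : ρ (a + b) = 2 * ρ b)
    (hne : e.1 ≠ e.2) (hA : e.1 ∈ A ∨ e.2 ∈ A) : edgeGadget ρ a b e A = 2 * ρ b := by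
  by_cases h₁ : e.1 ∈ A <;> by_cases h₂ : e.2 ∈ A
  · simp [edgeGadget, pairWeight, Finset.mem_symmDiff, h₁, h₂, hne, hne.symm, two_mul]
  · simp [edgeGadget, pairWeight, Finset.mem_symmDiff, h₁, h₂, hne, hne.symm, hzero,
      add_comm b a, hadd]
  · simp [edgeGadget, pairWeight, Finset.mem_symmDiff, h₁, h₂, hne, hne.symm, hzero, hadd]
  · exact absurd hA (not_or.2 ⟨h₁, h₂⟩)

theorem edgeGadget_of_notMem (hne : e.1 ≠ e.2) (h₁ : e.1 ∉ A) (h₂ : e.2 ∉ A) :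
    edgeGadget ρ a b e A = 2 * ρ a := by
  simp [edgeGadget, pairWeight, Finset.mem_symmDiff, h₁, h₂, hne, hne.symm, two_mul]

theorem edgeGadget_loop_of_mem (hzero : ρ 0 = 0) (hloop : e.1 = e.2) (hA : e.2 ∈ A) :
    edgeGadget ρ a b e A = 0 := by
  simp [edgeGadget, pairWeight, Finset.mem_symmDiff, hloop, hA, hzero]

theorem edgeGadget_loop_of_notMem (hloop : e.1 = e.2) (hA : e.2 ∉ A) :
    edgeGadget ρ a b e A = 2 * ρ (a + b) := by
  simp [edgeGadget, pairWeight, Finset.mem_symmDiff, hloop, hA, add_comm b a, two_mul]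

theorem edgeGadget_add_gap_le (hzero : ρ 0 = 0) (hadd : ρ (a + b) = 2 * ρ b)
    (hba : ρ b ≤ ρ a) (hab : ρ a ≤ ρ (a + b)) (h₁ : e.1 ∉ A) (h₂ : e.2 ∉ A)
    (hB : e.1 ∈ B ∨ e.2 ∈ B) :
    edgeGadget ρ a b e B + 2 * (ρ a - ρ b) ≤ edgeGadget ρ a b e A := by
  by_cases hloop : e.1 = e.2
  · have hmem : e.2 ∈ B := by simpa only [hloop, or_self] using hB
    rw [edgeGadget_loop_of_mem hzero hloop hmem, edgeGadget_loop_of_notMem hloop h₂]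
    linarith
  · rw [edgeGadget_of_mem_or_mem hzero hadd hloop hB, edgeGadget_of_notMem hloop h₁ h₂]
    linarith

theorem edgeGadget_eq_of_subset (hzero : ρ 0 = 0) (hadd : ρ (a + b) = 2 * ρ b)
    (hAB : A ⊆ B) (hA : e.1 ∈ A ∨ e.2 ∈ A) :
    edgeGadget ρ a b e B = edgeGadget ρ a b e A := by
  by_cases hloop : e.1 = e.2
  · have hmem : e.2 ∈ A := by simpa only [hloop, or_self] using hA
    rw [edgeGadget_loop_of_mem hzero hloop hmem, edgeGadget_loop_of_mem hzero hloop (hAB hmem)]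
  · rw [edgeGadget_of_mem_or_mem hzero hadd hloop hA,
      edgeGadget_of_mem_or_mem hzero hadd hloop (hA.imp (@hAB _) (@hAB _))]

theorem edgeGadget_antitone (hzero : ρ 0 = 0) (hadd : ρ (a + b) = 2 * ρ b)
    (hba : ρ b ≤ ρ a) (hab : ρ a ≤ ρ (a + b)) : Antitone (edgeGadget ρ a b e) := by
  intro A B hAB
  by_cases hA : e.1 ∈ A ∨ e.2 ∈ A
  · exact (edgeGadget_eq_of_subset hzero hadd hAB hA).le
  obtain ⟨hA₁, hA₂⟩ := not_or.1 hA
  by_cases hB : e.1 ∈ B ∨ e.2 ∈ B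
  · have hgap := edgeGadget_add_gap_le hzero hadd hba hab hA₁ hA₂ hB
    linarith
  obtain ⟨hB₁, hB₂⟩ := not_or.1 hB
  by_cases hloop : e.1 = e.2
  · rw [edgeGadget_loop_of_notMem hloop hA₂, edgeGadget_loop_of_notMem hloop hB₂]
  · rw [edgeGadget_of_notMem hloop hA₁ hA₂, edgeGadget_of_notMem hloop hB₁ hB₂]

end EdgeGadget

theorem sum_add_le_sum_of_antitone {ι α : Type*} [Preorder α] {s : Finset ι} {φ : ι → α → ℝ}
    (hφ : ∀ i ∈ s, Antitone (φ i)) {x y : α} (hxy : x ≤ y) {i : ι} (hi : i ∈ s) {δ : ℝ}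
    (hδ : φ i y + δ ≤ φ i x) : ∑ j ∈ s, φ j y + δ ≤ ∑ j ∈ s, φ j x := by
  have hdrop : φ i x - φ i y ≤ ∑ j ∈ s, (φ j x - φ j y) :=
    Finset.single_le_sum (f := fun j => φ j x - φ j y)
      (fun j hj => sub_nonneg.2 (hφ j hj hxy)) hi
  rw [Finset.sum_sub_distrib] at hdrop
  linarith

theorem rpow_one_div_add_eq_two_mul {k γ : ℝ} (hk : k ≠ 0) (hγ : 0 ≤ γ) :
    (((2 : ℝ) ^ k - 1) * γ + γ) ^ (1 / k) = 2 * γ ^ (1 / k) :=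
  calc (((2 : ℝ) ^ k - 1) * γ + γ) ^ (1 / k)
      = ((2 : ℝ) ^ k * γ) ^ (1 / k) := by ring_nf
    _ = ((2 : ℝ) ^ k) ^ (1 / k) * γ ^ (1 / k) := Real.mul_rpow (by positivity) hγ
    _ = 2 * γ ^ (1 / k) := by rw [one_div, Real.rpow_rpow_inv zero_le_two hk]

theorem rpow_one_div_le_rpow_one_div_add {k γ : ℝ} (hk : 0 ≤ k) (hγ : 0 ≤ γ) :
    (((2 : ℝ) ^ k - 1) * γ) ^ (1 / k) ≤ (((2 : ℝ) ^ k - 1) * γ + γ) ^ (1 / k) := by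
  have hpow : 0 ≤ (2 : ℝ) ^ k - 1 := sub_nonneg.2 (Real.one_le_rpow one_le_two hk)
  exact Real.rpow_le_rpow (mul_nonneg hpow hγ) (le_add_of_nonneg_right hγ)
    (one_div_nonneg.2 hk)

theorem vertex_cover_gadget_perturbed_general {V : Type*} [DecidableEq V] (E : Finset (V × V))
    {ρ : ℝ → ℝ} {a b : ℝ} (hzero : ρ 0 = 0) (hadd : ρ (a + b) = 2 * ρ b)
    (hab : ρ a ≤ ρ (a + b)) (g : Finset V → ℝ)
    (hg : ∀ (A : Finset V) (u : V), g (A ∪ {u}) - g A < 2 * (ρ a - ρ b)) (A : Finset V)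
    (hmin : ∀ A' : Finset V,
      g A + ∑ e ∈ E, edgeGadget ρ a b e A ≤ g A' + ∑ e ∈ E, edgeGadget ρ a b e A') :
    ∀ e ∈ E, e.1 ∈ A ∨ e.2 ∈ A := by
  intro e he
  by_contra huncovered
  obtain ⟨h₁, h₂⟩ := not_or.1 huncovered
  have hba : ρ b ≤ ρ a := by
    have hgap := hg {e.1} e.1
    rw [Finset.union_self, sub_self] at hgap
    linarith
  have hdrop : ∑ e' ∈ E, edgeGadget ρ a b e' (A ∪ {e.1}) + 2 * (ρ a - ρ b)
      ≤ ∑ e' ∈ E, edgeGadget ρ a b e' A :=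
    sum_add_le_sum_of_antitone (fun _ _ => edgeGadget_antitone hzero hadd hba hab)
      Finset.subset_union_left he
      (edgeGadget_add_gap_le hzero hadd hba hab h₁ h₂
        (.inl (Finset.mem_union_right A (Finset.mem_singleton_self e.1))))
  linarith [hmin (A ∪ {e.1}), hg A e.1]

/-- With the vertex-cover gadget `F^c` built from `γ₁ = (2^k − 1)γ₂`, if
`g` is monotone with unit increments bounded by `c` (i.e.,
`0 ≤ g(A ∪ {u}) − g(A) ≤ c`) and `2(γ₁^{1/k} − γ₂^{1/k}) > c`, then every
minimizer of `A ↦ g(A) + F^c(A)` over all subsets of `V` is a vertex cover. -/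
theorem vertex_cover_gadget_perturbed
    {V : Type*} [Fintype V] [DecidableEq V]
    (E : Finset (V × V)) (hEne : E.Nonempty) (hE : ∀ e ∈ E, e.1 ≠ e.2)
    (k : ℝ) (hk : 1 < k) (γ₂ : ℝ) (hγ₂ : 0 < γ₂)
    (g : Finset V → ℝ) (c : ℝ) (hc : 0 ≤ c)
    (hg : ∀ (A : Finset V) (u : V),
      0 ≤ g (A ∪ {u}) - g A ∧ g (A ∪ {u}) - g A ≤ c)
    (hgap : c < 2 * ((((2 : ℝ) ^ k - 1) * γ₂) ^ (1 / k) - γ₂ ^ (1 / k))) :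
    let γ₁ : ℝ := ((2 : ℝ) ^ k - 1) * γ₂
    let f₁ : V × V → Finset V → ℝ := fun e Y =>
      (γ₁ * (if e.1 ∈ Y then (1 : ℝ) else 0) + γ₂ * (if e.2 ∈ Y then (1 : ℝ) else 0)) ^ (1 / k)
    let f₂ : V × V → Finset V → ℝ := fun e Y =>
      (γ₂ * (if e.1 ∈ Y then (1 : ℝ) else 0) + γ₁ * (if e.2 ∈ Y then (1 : ℝ) else 0)) ^ (1 / k)
    let h : V × V → Finset V → ℝ := fun e A =>
      f₁ e ((A \ {e.1}) ∪ ({e.1} \ A)) + f₂ e ((A \ {e.2}) ∪ ({e.2} \ A))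
    let Fc : Finset V → ℝ := fun A => ∑ e ∈ E, h e A
    ∀ A : Finset V,
      (∀ A' : Finset V, g A + Fc A ≤ g A' + Fc A') →
      (∀ e ∈ E, e.1 ∈ A ∨ e.2 ∈ A) := by
  have hk₀ : 0 < k := one_pos.trans hk
  exact vertex_cover_gadget_perturbed_general E (ρ := (· ^ (1 / k)))
    (Real.zero_rpow (one_div_pos.2 hk₀).ne') (rpow_one_div_add_eq_two_mul hk₀.ne' hγ₂.le)
    (rpow_one_div_le_rpow_one_div_add hk₀.le hγ₂.le) g (fun A u => (hg A u).2.trans_lt hgap)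
end
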